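/- Let $S$ be a set and let $\mathcal L$ be any family of subsets of $S$ (for example, the family of lines of a partial linear space). For an integer $k \ge 0$ let $\mathfrak y_k(S)$ be the set of multisets of size $k$ with elements in $S$; for multisets $e, f$ and an integer $r \ge 0$, $e + f$ is the multiset sum, $r\cdot f$ multiplies all multiplicities of $f$ by $r$, and for $x \in S$, $e + r\cdot x$ is $e$ with $r$ additional copies of $x$. The Veronese space $V_k(S,\mathcal L)$ has point set $\mathfrak y_k(S)$, and its blocks are the sets $\{e + r\cdot x : x \in B\}$ with $0 < r \le k$, $e \in \mathfrak y_{k-r}(S)$, $B \in \mathcal L$. Two points are adjacent if some block contains both of them. Let $k \ge 0$, $k' \ge 0$, $r \ge 1$ be integers and fix $e \in \mathfrak y_{k'}(S)$. Then: (1) the map $\mu_r : \mathfrak y_k(S) \to \mathfrak y_{rk}(S)$, $f \mapsto r\cdot f$, is well defined and injective, maps every block of $V_k(S,\mathcal L)$ onto a block of $V_{rk}(S,\mathcal L)$, and two points $f, g \in \mathfrak y_k(S)$ are adjacent in $V_k(S,\mathcal L)$ if and only if $\mu_r(f), \mu_r(g)$ are adjacent in $V_{rk}(S,\mathcal L)$;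 (2) the map $\tau_e : \mathfrak y_k(S) \to \mathfrak y_{k+k'}(S)$, $f \mapsto e + f$, is well defined and injective, maps every block of $V_k(S,\mathcal L)$ onto a block of $V_{k+k'}(S,\mathcal L)$, and two distinct points $f \ne g$ of $\mathfrak y_k(S)$ are adjacent in $V_k(S,\mathcal L)$ if and only if $\tau_e(f), \tau_e(g)$ are adjacent in $V_{k+k'}(S,\mathcal L)$; (3) the map $x \mapsto 1\cdot x$ is an isomorphism of $(S,\mathcal L)$ onto $V_1(S,\mathcal L)$: it is a bijection of $S$ onto $\mathfrak y_1(S)$, and the blocks of $V_1(S,\mathcal L)$ are exactly the images of the members of $\mathcal L$. -/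

import Mathlib

/-- The set of multisets of size `k` with elements in `S`. -/
def veroPoints (S : Type*) (k : ℕ) : Set (Multiset S) :=
  { m | Multiset.card m = k }

/-- The set `e + rB`, that is, `{e + r·x : x ∈ B}`. -/
def veroBlock {S : Type*} (e : Multiset S) (r : ℕ) (B : Set S) : Set (Multiset S) :=
  { m | ∃ x ∈ B, m = e + Multiset.replicate r x }

/-- The blocks of the `k`-th Veronese space over `(S, ℒ)`. -/
def veroBlocks {S : Type*} (k : ℕ) (ℒ : Set (Set S)) : Set (Set (Multiset S)) :=
  { C | ∃ (r : ℕ) (e : Multiset S) (B : Set S),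
      0 < r ∧ r ≤ k ∧ e ∈ veroPoints S (k - r) ∧ B ∈ ℒ ∧ C = veroBlock e r B }

/-- Two points are adjacent if some block contains both of them. -/
def BlockAdj {P : Type*} (blocks : Set (Set P)) (a b : P) : Prop :=
  ∃ C ∈ blocks, a ∈ C ∧ b ∈ C

/-!
Two distinct points `f`, `g` of a Veronese space are adjacent exactly when
`f + t·y = g + t·x` for some `t` and some `x`, `y` on a common block: since `x ≠ y`, the `t` copies
of `x` must already be contained in `f`, and removing them leaves the common part of `f` and `g`.
This condition mentions neither the level `k` nor the common part, so it is invariant under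
translations by cancellation. It is invariant under dilation by `r` because
`r·f + s·y = r·g + s·x` forces `r ∣ s`, as the multiplicity of `x` shows. In the remaining case
`f = g`, adjacency says that `f` has an element lying on a block, which dilations preserve as well.
-/

section Multiset

variable {α : Type*}

theorem exists_add_eq_and_add_eq_of_disjoint {a b f g : Multiset α} (hab : Disjoint a b)
    (h : f + b = g + a) : ∃ c, c + a = f ∧ c + b = g := by
  classical
  have haf : a ≤ f := by
    refine Multiset.le_iff_count.mpr fun x => ?_
    have hcount := congrArg (Multiset.count x) h
    have hinter := congrArg (Multiset.count x) (Multiset.inter_eq_zero_iff_disjoint.mpr hab)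
    simp only [Multiset.count_add, Multiset.count_inter, Multiset.count_zero] at hcount hinter
    omega
  obtain ⟨c, rfl⟩ := le_iff_exists_add'.mp haf
  exact ⟨c, rfl, add_right_cancel (b := a) (by rw [← h, add_right_comm])⟩

theorem dvd_of_nsmul_add_replicate_eq {f g : Multiset α} {x y : α} {r s t : ℕ} (hxy : x ≠ y)
    (h : r • f + Multiset.replicate s y = r • g + Multiset.replicate t x) : r ∣ t := by
  classical
  have hcount : r * f.count x = r * g.count x + t := by
    simpa [Multiset.count_replicate, hxy.symm] using congrArg (Multiset.count x) h
  exact (Nat.dvd_add_right (Nat.dvd_mul_right r _)).mp (hcount ▸ Nat.dvd_mul_right r _)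

theorem exists_nsmul_add_replicate_eq_iff {f g : Multiset α} {x y : α} {r : ℕ} (hr : r ≠ 0) :
    (∃ s, r • f + Multiset.replicate s y = r • g + Multiset.replicate s x) ↔
      ∃ t, f + Multiset.replicate t y = g + Multiset.replicate t x := by
  constructor
  · rintro ⟨s, h⟩
    obtain rfl | hxy := eq_or_ne x y
    · obtain rfl : f = g := nsmul_right_injective hr (add_right_cancel h)
      exact ⟨0, rfl⟩
    · obtain ⟨t, rfl⟩ := dvd_of_nsmul_add_replicate_eq hxy h
      refine ⟨t, nsmul_right_injective hr ?_⟩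
      simpa only [nsmul_add, Multiset.nsmul_replicate] using h
  · rintro ⟨t, h⟩
    refine ⟨r * t, ?_⟩
    simpa only [nsmul_add, Multiset.nsmul_replicate] using congrArg (r • ·) h

end Multiset

/-- The multisets `f` and `g` differ by `t · x - t · y` for some `t` and some `x`, `y` on a common
block of `ℒ`. The difference is written without subtraction, with `t = 0` and `x = y` allowed. -/
def DifferAlongBlock {S : Type*} (ℒ : Set (Set S)) (f g : Multiset S) : Prop :=
  ∃ B ∈ ℒ, ∃ x ∈ B, ∃ y ∈ B, ∃ t, f + Multiset.replicate t y = g + Multiset.replicate t x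

section Veronese

variable {S : Type*} {ℒ : Set (Set S)} {k k' r : ℕ} {e f g : Multiset S}

theorem differAlongBlock_nsmul_iff (hr : r ≠ 0) :
    DifferAlongBlock ℒ (r • f) (r • g) ↔ DifferAlongBlock ℒ f g := by
  simp only [DifferAlongBlock, exists_nsmul_add_replicate_eq_iff hr]

theorem differAlongBlock_add_left_iff :
    DifferAlongBlock ℒ (e + f) (e + g) ↔ DifferAlongBlock ℒ f g := by
  simp only [DifferAlongBlock, add_assoc, add_right_inj]

theorem mapsTo_nsmul_veroPoints (r k : ℕ) :
    Set.MapsTo (fun f : Multiset S => r • f) (veroPoints S k) (veroPoints S (r * k)) := by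
  intro f hf
  obtain rfl : f.card = k := hf
  exact Multiset.card_nsmul f r

theorem mapsTo_add_left_veroPoints (he : e ∈ veroPoints S k') (k : ℕ) :
    Set.MapsTo (fun f : Multiset S => e + f) (veroPoints S k) (veroPoints S (k + k')) := by
  intro f hf
  obtain rfl : f.card = k := hf
  obtain rfl : e.card = k' := he
  exact (Multiset.card_add e f).trans (add_comm _ _)

theorem bijOn_singleton_veroPoints_one :
    Set.BijOn (fun x : S => ({x} : Multiset S)) Set.univ (veroPoints S 1) := by
  refine ⟨fun x _ => Multiset.card_singleton x,
    fun x _ y _ hxy => Multiset.singleton_inj.mp hxy, fun m hm => ?_⟩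
  obtain ⟨x, rfl⟩ := Multiset.card_eq_one.mp hm
  exact ⟨x, Set.mem_univ x, rfl⟩

theorem veroBlock_eq_image (e : Multiset S) (r : ℕ) (B : Set S) :
    veroBlock e r B = (fun x => e + Multiset.replicate r x) '' B := by
  ext m
  simp only [veroBlock, Set.mem_ofPred_eq, Set.mem_image, eq_comm]

theorem mem_veroBlocks_iff {C : Set (Multiset S)} :
    C ∈ veroBlocks k ℒ ↔ ∃ (r : ℕ) (e : Multiset S) (B : Set S),
      0 < r ∧ e.card + r = k ∧ B ∈ ℒ ∧ C = veroBlock e r B := by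
  have card_iff (r : ℕ) (e : Multiset S) :
      r ≤ k ∧ e ∈ veroPoints S (k - r) ↔ e.card + r = k := by
    rw [veroPoints, Set.mem_ofPred_eq]
    omega
  simp only [veroBlocks, Set.mem_ofPred_eq, ← card_iff, and_assoc]

theorem image_nsmul_mem_veroBlocks (hr : r ≠ 0) {C : Set (Multiset S)}
    (hC : C ∈ veroBlocks k ℒ) : (fun f : Multiset S => r • f) '' C ∈ veroBlocks (r * k) ℒ := by
  obtain ⟨s, e, B, hs, rfl, hB, rfl⟩ := mem_veroBlocks_iff.mp hC
  have hrs : 0 < r * s := Nat.mul_pos (Nat.pos_of_ne_zero hr) hs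
  refine mem_veroBlocks_iff.mpr ⟨r * s, r • e, B, hrs, ?_, hB, ?_⟩
  · rw [Multiset.card_nsmul, mul_add]
  · simp only [veroBlock_eq_image, Set.image_image, nsmul_add, Multiset.nsmul_replicate]

theorem image_add_left_mem_veroBlocks (he : e ∈ veroPoints S k') {C : Set (Multiset S)}
    (hC : C ∈ veroBlocks k ℒ) : (fun f : Multiset S => e + f) '' C ∈ veroBlocks (k + k') ℒ := by
  obtain ⟨s, d, B, hs, rfl, hB, rfl⟩ := mem_veroBlocks_iff.mp hC
  obtain rfl : e.card = k' := he
  refine mem_veroBlocks_iff.mpr ⟨s, e + d, B, hs, ?_, hB, ?_⟩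
  · rw [Multiset.card_add, add_assoc, add_comm]
  · simp only [veroBlock_eq_image, Set.image_image, add_assoc]

theorem mem_veroBlocks_one_iff {C : Set (Multiset S)} :
    C ∈ veroBlocks 1 ℒ ↔ ∃ B ∈ ℒ, (fun x : S => ({x} : Multiset S)) '' B = C := by
  have veroBlock_zero_one (B : Set S) : veroBlock 0 1 B = (fun x => {x}) '' B := by
    simp only [veroBlock_eq_image, zero_add, Multiset.replicate_one]
  rw [mem_veroBlocks_iff]
  constructor
  · rintro ⟨r, e, B, hr, hcard, hB, rfl⟩
    obtain rfl : r = 1 := by omega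
    obtain rfl : e = 0 := Multiset.card_eq_zero.mp (by omega)
    exact ⟨B, hB, (veroBlock_zero_one B).symm⟩
  · rintro ⟨B, hB, rfl⟩
    exact ⟨1, 0, B, one_pos, rfl, hB, (veroBlock_zero_one B).symm⟩

theorem blockAdj_veroBlocks_iff (hf : f ∈ veroPoints S k) :
    BlockAdj (veroBlocks k ℒ) f g ↔ ∃ B ∈ ℒ, ∃ x ∈ B, ∃ y ∈ B, ∃ t > 0, ∃ c,
      c + Multiset.replicate t x = f ∧ c + Multiset.replicate t y = g := by
  constructor
  · rintro ⟨_, hC, hfC, hgC⟩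
    obtain ⟨t, c, B, ht, -, hB, rfl⟩ := mem_veroBlocks_iff.mp hC
    obtain ⟨x, hx, rfl⟩ := hfC
    obtain ⟨y, hy, rfl⟩ := hgC
    exact ⟨B, hB, x, hx, y, hy, t, ht, c, rfl, rfl⟩
  · rintro ⟨B, hB, x, hx, y, hy, t, ht, c, rfl, rfl⟩
    have hcard : (c + Multiset.replicate t x).card = k := hf
    rw [Multiset.card_add, Multiset.card_replicate] at hcard
    exact ⟨veroBlock c t B, mem_veroBlocks_iff.mpr ⟨t, c, B, ht, hcard, hB, rfl⟩,
      ⟨x, hx, rfl⟩, ⟨y, hy, rfl⟩⟩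

theorem blockAdj_veroBlocks_iff_of_ne (hf : f ∈ veroPoints S k) (hfg : f ≠ g) :
    BlockAdj (veroBlocks k ℒ) f g ↔ DifferAlongBlock ℒ f g := by
  rw [blockAdj_veroBlocks_iff hf]
  constructor
  · rintro ⟨B, hB, x, hx, y, hy, t, -, c, rfl, rfl⟩
    exact ⟨B, hB, x, hx, y, hy, t, add_right_comm _ _ _⟩
  · rintro ⟨B, hB, x, hx, y, hy, t, h⟩
    have ht : 0 < t := by
      refine Nat.pos_of_ne_zero ?_
      rintro rfl
      exact hfg (by simpa only [Multiset.replicate_zero, add_zero] using h)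
    have hxy : x ≠ y := by
      rintro rfl
      exact hfg (add_right_cancel h)
    have hdisj : Disjoint (Multiset.replicate t x) (Multiset.replicate t y) :=
      Multiset.disjoint_left.mpr fun hz hz' =>
        hxy ((Multiset.eq_of_mem_replicate hz).symm.trans (Multiset.eq_of_mem_replicate hz'))
    exact ⟨B, hB, x, hx, y, hy, t, ht, exists_add_eq_and_add_eq_of_disjoint hdisj h⟩

theorem blockAdj_veroBlocks_self_iff (hf : f ∈ veroPoints S k) :
    BlockAdj (veroBlocks k ℒ) f f ↔ ∃ B ∈ ℒ, ∃ x ∈ B, x ∈ f := by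
  rw [blockAdj_veroBlocks_iff hf]
  constructor
  · rintro ⟨B, hB, x, hx, -, -, t, ht, c, rfl, -⟩
    exact ⟨B, hB, x, hx,
      Multiset.mem_add.mpr (.inr (Multiset.mem_replicate.mpr ⟨ht.ne', rfl⟩))⟩
  · rintro ⟨B, hB, x, hx, hxf⟩
    obtain ⟨c, hc⟩ := le_iff_exists_add'.mp (Multiset.singleton_le.mpr hxf)
    exact ⟨B, hB, x, hx, x, hx, 1, one_pos, c, hc.symm, hc.symm⟩

theorem blockAdj_veroBlocks_nsmul_iff (hr : r ≠ 0) (hf : f ∈ veroPoints S k) :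
    BlockAdj (veroBlocks (r * k) ℒ) (r • f) (r • g) ↔ BlockAdj (veroBlocks k ℒ) f g := by
  have hrf : r • f ∈ veroPoints S (r * k) := mapsTo_nsmul_veroPoints r k hf
  obtain rfl | hfg := eq_or_ne f g
  · simp only [blockAdj_veroBlocks_self_iff hf, blockAdj_veroBlocks_self_iff hrf,
      Multiset.mem_nsmul_of_ne_zero hr]
  · have hrfg : r • f ≠ r • g := (nsmul_right_injective hr).ne hfg
    rw [blockAdj_veroBlocks_iff_of_ne hf hfg, blockAdj_veroBlocks_iff_of_ne hrf hrfg,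
      differAlongBlock_nsmul_iff hr]

theorem blockAdj_veroBlocks_add_left_iff (he : e ∈ veroPoints S k') (hf : f ∈ veroPoints S k)
    (hfg : f ≠ g) :
    BlockAdj (veroBlocks (k + k') ℒ) (e + f) (e + g) ↔ BlockAdj (veroBlocks k ℒ) f g := by
  have hef : e + f ∈ veroPoints S (k + k') := mapsTo_add_left_veroPoints he k hf
  have hefg : e + f ≠ e + g := (add_right_injective e).ne hfg
  rw [blockAdj_veroBlocks_iff_of_ne hf hfg, blockAdj_veroBlocks_iff_of_ne hef hefg,
    differAlongBlock_add_left_iff]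

end Veronese

theorem stmt_1 {S : Type*} (ℒ : Set (Set S)) (k k' r : ℕ) (hr : 1 ≤ r)
    (e : Multiset S) (he : e ∈ veroPoints S k') :
    -- (1) the map `f ↦ r·f`
    (Set.MapsTo (fun f : Multiset S => r • f) (veroPoints S k) (veroPoints S (r * k)) ∧
      Set.InjOn (fun f : Multiset S => r • f) (veroPoints S k) ∧
      (∀ C ∈ veroBlocks k ℒ, (fun f : Multiset S => r • f) '' C ∈ veroBlocks (r * k) ℒ) ∧
      (∀ f ∈ veroPoints S k, ∀ g ∈ veroPoints S k,
        (BlockAdj (veroBlocks k ℒ) f g ↔ BlockAdj (veroBlocks (r * k) ℒ) (r • f) (r • g)))) ∧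
    -- (2) the map `f ↦ e + f`
    (Set.MapsTo (fun f : Multiset S => e + f) (veroPoints S k) (veroPoints S (k + k')) ∧
      Set.InjOn (fun f : Multiset S => e + f) (veroPoints S k) ∧
      (∀ C ∈ veroBlocks k ℒ, (fun f : Multiset S => e + f) '' C ∈ veroBlocks (k + k') ℒ) ∧
      (∀ f ∈ veroPoints S k, ∀ g ∈ veroPoints S k, f ≠ g →
        (BlockAdj (veroBlocks k ℒ) f g ↔ BlockAdj (veroBlocks (k + k') ℒ) (e + f) (e + g)))) ∧
    -- (3) the map `x ↦ 1·x` is an isomorphism of `(S, ℒ)` onto the first Veronese space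
    (Set.BijOn (fun x : S => ({x} : Multiset S)) Set.univ (veroPoints S 1) ∧
      ∀ C : Set (Multiset S), C ∈ veroBlocks 1 ℒ ↔
        ∃ B ∈ ℒ, (fun x : S => ({x} : Multiset S)) '' B = C) := by
  have hr0 : r ≠ 0 := Nat.one_le_iff_ne_zero.mp hr
  refine ⟨⟨mapsTo_nsmul_veroPoints r k, (nsmul_right_injective hr0).injOn, ?_, ?_⟩,
    ⟨mapsTo_add_left_veroPoints he k, (add_right_injective e).injOn, ?_, ?_⟩,
    bijOn_singleton_veroPoints_one, fun _ => mem_veroBlocks_one_iff⟩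
  · exact fun C hC => image_nsmul_mem_veroBlocks hr0 hC
  · exact fun f hf g _ => (blockAdj_veroBlocks_nsmul_iff hr0 hf).symm
  · exact fun C hC => image_add_left_mem_veroBlocks he hC
  · exact fun f hf g _ hfg => (blockAdj_veroBlocks_add_left_iff he hf hfg).symm
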